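/- arXiv:2604.25872 — 3 statements merged into one kernel-verified Lean document; each statement's English description precedes it below -/
import Mathlib

section
/- Suppose the proxy reward r_P and ground truth reward r_G agree on all outputs outside a set Z ⊆ Y, i.e. r_P(y) = r_G(y) for all y ∈ Y \ Z. Let θ_t and θ^G_t be gradient flows maximizing V_P and V_G respectively, started from the same initial parameters θ_0 = θ^G_0. Let B = max_{y∈Y} ‖φ(y)‖ and Δ_Z = max_{y∈Z} |r_P(y) − r_G(y)|. For any time horizon T ≥ 0 and any ε > 0, if Δ_Z · π_{θ_0}(Z) · exp(10 B² T) ≤ 2ε, then for all t ∈ [0, T] the total variation distance satisfies TV(π_{θ_t}, π_{θ^G_t}) ≤ ε. -/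
open scoped BigOperators RealInnerProductSpace

noncomputable def policy {Y : Type*} [Fintype Y] {D : ℕ}
    (φ : Y → EuclideanSpace ℝ (Fin D)) (θ : EuclideanSpace ℝ (Fin D)) (y : Y) : ℝ :=
  Real.exp ⟪φ y, θ⟫ / ∑ z, Real.exp ⟪φ z, θ⟫

noncomputable def expReward {Y : Type*} [Fintype Y] {D : ℕ}
    (φ : Y → EuclideanSpace ℝ (Fin D)) (r : Y → ℝ) (θ : EuclideanSpace ℝ (Fin D)) : ℝ :=
  ∑ y, policy φ θ y * r y

/-- The mean feature vector under the policy. -/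
noncomputable def meanFeat {Y : Type*} [Fintype Y] {D : ℕ}
    (φ : Y → EuclideanSpace ℝ (Fin D)) (θ : EuclideanSpace ℝ (Fin D)) :
    EuclideanSpace ℝ (Fin D) := ∑ y, policy φ θ y • φ y

/-- Explicit policy gradient. -/
noncomputable def gradV {Y : Type*} [Fintype Y] {D : ℕ}
    (φ : Y → EuclideanSpace ℝ (Fin D)) (r : Y → ℝ) (θ : EuclideanSpace ℝ (Fin D)) :
    EuclideanSpace ℝ (Fin D) := ∑ y, (policy φ θ y * r y) • (φ y - meanFeat φ θ)

section helpers
variable {Y : Type*} [Fintype Y] [Nonempty Y] {D : ℕ} (φ : Y → EuclideanSpace ℝ (Fin D))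

lemma partition_pos (θ : EuclideanSpace ℝ (Fin D)) : 0 < ∑ z, Real.exp ⟪φ z, θ⟫ :=
  Finset.sum_pos (fun _ _ => Real.exp_pos _) Finset.univ_nonempty

lemma policy_nonneg (θ : EuclideanSpace ℝ (Fin D)) (y : Y) : 0 ≤ policy φ θ y :=
  div_nonneg (Real.exp_pos _).le (partition_pos φ θ).le

lemma policy_sum (θ : EuclideanSpace ℝ (Fin D)) : ∑ y, policy φ θ y = 1 := by
  unfold policy
  rw [← Finset.sum_div, div_self (partition_pos φ θ).ne']

lemma hasGrad_policy (θ : EuclideanSpace ℝ (Fin D)) (y : Y) :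
    HasGradientAt (fun θ => policy φ θ y) (policy φ θ y • (φ y - meanFeat φ θ)) θ := by
  have hE : ∀ z, HasFDerivAt (fun θ : EuclideanSpace ℝ (Fin D) => Real.exp ⟪φ z, θ⟫)
      (Real.exp ⟪φ z, θ⟫ • innerSL ℝ (φ z)) θ := by
    intro z
    exact ((innerSL ℝ (φ z)).hasFDerivAt (x := θ)).exp
  have hS : HasFDerivAt (fun θ : EuclideanSpace ℝ (Fin D) => ∑ z, Real.exp ⟪φ z, θ⟫)
      (∑ z, Real.exp ⟪φ z, θ⟫ • innerSL ℝ (φ z)) θ := HasFDerivAt.fun_sum fun z _ => hE z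
  have hpos := partition_pos φ θ
  have h := (hE y).mul ((hasDerivAt_inv hpos.ne').comp_hasFDerivAt θ hS)
  rw [hasGradientAt_iff_hasFDerivAt]
  refine HasFDerivAt.congr_fderiv (f := fun θ => policy φ θ y) h ?_
  ext v
  have hm : ⟪meanFeat φ θ, v⟫ =
      (∑ z, Real.exp ⟪φ z, θ⟫ * ⟪φ z, v⟫) / ∑ z, Real.exp ⟪φ z, θ⟫ := by
    simp only [meanFeat, policy, sum_inner, inner_smul_left, Finset.sum_div]
    refine Finset.sum_congr rfl fun z _ => ?_
    simp only [conj_trivial]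
    ring
  simp only [InnerProductSpace.toDual_apply_apply, inner_smul_left, inner_sub_left, hm,
    _root_.smul_apply, _root_.add_apply, _root_.sum_apply,
    innerSL_apply_apply, smul_eq_mul, policy, conj_trivial, Function.comp_apply]
  field_simp
  ring

lemma hasGrad_expReward (r : Y → ℝ) (θ : EuclideanSpace ℝ (Fin D)) :
    HasGradientAt (expReward φ r) (gradV φ r θ) θ := by
  rw [hasGradientAt_iff_hasFDerivAt]
  have h : HasFDerivAt (fun θ => ∑ y, policy φ θ y * r y) _ θ :=
    HasFDerivAt.fun_sum fun y (_ : y ∈ Finset.univ) =>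
      (hasGradientAt_iff_hasFDerivAt.1 (hasGrad_policy φ θ y)).mul_const (r y)
  refine HasFDerivAt.congr_fderiv (f := expReward φ r) h ?_
  ext v
  simp only [gradV, InnerProductSpace.toDual_apply_apply, inner_smul_left, sum_inner,
    _root_.smul_apply, _root_.sum_apply, smul_eq_mul, conj_trivial]
  refine Finset.sum_congr rfl fun z _ => ?_
  ring

lemma norm_meanFeat_le {B : ℝ} (hB : ∀ y, ‖φ y‖ ≤ B) (θ : EuclideanSpace ℝ (Fin D)) : ‖meanFeat φ θ‖ ≤ B := by
  calc ‖meanFeat φ θ‖ ≤ ∑ y, ‖policy φ θ y • φ y‖ := norm_sum_le _ _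
    _ ≤ ∑ y, policy φ θ y * B := by
      refine Finset.sum_le_sum fun y _ => ?_
      rw [norm_smul, Real.norm_of_nonneg (policy_nonneg φ θ y)]
      exact mul_le_mul_of_nonneg_left (hB y) (policy_nonneg φ θ y)
    _ = B := by rw [← Finset.sum_mul, policy_sum, one_mul]

lemma norm_gradV_le {B : ℝ} (hB : ∀ y, ‖φ y‖ ≤ B) (r : Y → ℝ) (θ : EuclideanSpace ℝ (Fin D)) :
    ‖gradV φ r θ‖ ≤ 2 * B * ∑ y, policy φ θ y * |r y| := by
  calc ‖gradV φ r θ‖ ≤ ∑ y, ‖(policy φ θ y * r y) • (φ y - meanFeat φ θ)‖ := norm_sum_le _ _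
    _ ≤ ∑ y, 2 * B * (policy φ θ y * |r y|) := by
      refine Finset.sum_le_sum fun y _ => ?_
      rw [norm_smul, norm_mul, Real.norm_of_nonneg (policy_nonneg φ θ y), Real.norm_eq_abs,
        mul_comm]
      refine mul_le_mul_of_nonneg_right ?_ (mul_nonneg (policy_nonneg φ θ y) (abs_nonneg _))
      have := norm_sub_le (φ y) (meanFeat φ θ)
      linarith [hB y, norm_meanFeat_le φ hB θ]
    _ = _ := by rw [Finset.mul_sum]

lemma norm_gradV_le' {B : ℝ} (hB : ∀ y, ‖φ y‖ ≤ B) (r : Y → ℝ) (hr : ∀ y, |r y| ≤ 1) (θ : EuclideanSpace ℝ (Fin D)) :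
    ‖gradV φ r θ‖ ≤ 2 * B := by
  have hB0 : 0 ≤ B := (norm_nonneg _).trans (hB (Classical.arbitrary Y))
  refine (norm_gradV_le φ hB r θ).trans ?_
  have : ∑ y, policy φ θ y * |r y| ≤ 1 := by
    rw [← policy_sum φ θ]
    exact Finset.sum_le_sum fun y _ => mul_le_of_le_one_right (policy_nonneg φ θ y) (hr y)
  nlinarith

lemma tv_le {B : ℝ} (hB : ∀ y, ‖φ y‖ ≤ B) (θ θ' : EuclideanSpace ℝ (Fin D)) :
    ∑ y, |policy φ θ y - policy φ θ' y| ≤ 2 * B * ‖θ - θ'‖ := by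
  set σ : Y → ℝ := fun y => if 0 ≤ policy φ θ y - policy φ θ' y then 1 else -1 with hσ
  have hσ1 : ∀ y, |σ y| ≤ 1 := by
    intro y
    simp only [hσ]
    split_ifs <;> simp
  have h1 : ∑ y, |policy φ θ y - policy φ θ' y| = expReward φ σ θ - expReward φ σ θ' := by
    simp only [expReward, ← Finset.sum_sub_distrib]
    refine Finset.sum_congr rfl fun y _ => ?_
    simp only [hσ]
    split_ifs with h
    · rw [abs_of_nonneg h]; ring
    · rw [abs_of_neg (not_le.1 h)]; ring
  rw [h1]
  refine (le_abs_self _).trans ?_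
  rw [← Real.norm_eq_abs]
  refine convex_univ.norm_image_sub_le_of_norm_hasFDerivWithin_le
    (f' := fun x => InnerProductSpace.toDual ℝ _ (gradV φ σ x))
    (fun x _ => (hasGradientAt_iff_hasFDerivAt.1 (hasGrad_expReward φ σ x)).hasFDerivWithinAt)
    (fun x _ => ?_) (Set.mem_univ _) (Set.mem_univ _)
  rw [LinearIsometryEquiv.norm_map]
  exact norm_gradV_le' φ hB σ hσ1 x

lemma gradV_eq (r : Y → ℝ) (θ : EuclideanSpace ℝ (Fin D)) :
    gradV φ r θ = ∑ y, policy φ θ y • r y • φ y - expReward φ r θ • meanFeat φ θ := by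
  simp only [gradV, smul_sub, Finset.sum_sub_distrib, expReward, mul_smul, Finset.sum_smul]

lemma gradV_lip {B : ℝ} (hB : ∀ y, ‖φ y‖ ≤ B) (r : Y → ℝ) (hr : ∀ y, |r y| ≤ 1) (θ θ' : EuclideanSpace ℝ (Fin D)) :
    ‖gradV φ r θ - gradV φ r θ'‖ ≤ 6 * B ^ 2 * ‖θ - θ'‖ := by
  have hB0 : 0 ≤ B := (norm_nonneg _).trans (hB (Classical.arbitrary Y))
  set q := ∑ y, |policy φ θ y - policy φ θ' y| with hq
  have hq0 : 0 ≤ q := Finset.sum_nonneg fun _ _ => abs_nonneg _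
  have hqle : q ≤ 2 * B * ‖θ - θ'‖ := tv_le φ hB θ θ'
  have key : ∀ u : Y → EuclideanSpace ℝ (Fin D), (∀ y, ‖u y‖ ≤ B) →
      ‖∑ y, policy φ θ y • u y - ∑ y, policy φ θ' y • u y‖ ≤ q * B := by
    intro u hu
    rw [← Finset.sum_sub_distrib, hq, Finset.sum_mul]
    refine norm_sum_le_of_le _ fun y _ => ?_
    rw [← sub_smul, norm_smul, Real.norm_eq_abs]
    exact mul_le_mul_of_nonneg_left (hu y) (abs_nonneg _)
  have h1 := key (fun y => r y • φ y) fun y => by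
    rw [norm_smul, Real.norm_eq_abs]
    nlinarith [hr y, hB y, norm_nonneg (φ y), abs_nonneg (r y)]
  have h2 : ‖meanFeat φ θ - meanFeat φ θ'‖ ≤ q * B := key φ hB
  have h3 : |expReward φ r θ - expReward φ r θ'| ≤ q := by
    simp only [expReward, ← Finset.sum_sub_distrib, hq]
    refine (Finset.abs_sum_le_sum_abs _ _).trans (Finset.sum_le_sum fun y _ => ?_)
    rw [← sub_mul, abs_mul]
    exact mul_le_of_le_one_right (abs_nonneg _) (hr y)
  have h4 : |expReward φ r θ'| ≤ 1 := by
    rw [← policy_sum φ θ']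
    refine (Finset.abs_sum_le_sum_abs _ _).trans (Finset.sum_le_sum fun y _ => ?_)
    rw [abs_mul, abs_of_nonneg (policy_nonneg φ θ' y)]
    exact mul_le_of_le_one_right (policy_nonneg φ θ' y) (hr y)
  have h5 : gradV φ r θ - gradV φ r θ' =
      (∑ y, policy φ θ y • r y • φ y - ∑ y, policy φ θ' y • r y • φ y)
      - (expReward φ r θ - expReward φ r θ') • meanFeat φ θ
      - expReward φ r θ' • (meanFeat φ θ - meanFeat φ θ') := by
    rw [gradV_eq, gradV_eq, sub_smul, smul_sub]
    abel
  have h6 : ‖(expReward φ r θ - expReward φ r θ') • meanFeat φ θ‖ ≤ q * B := by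
    rw [norm_smul, Real.norm_eq_abs]
    exact mul_le_mul h3 (norm_meanFeat_le φ hB θ) (norm_nonneg _) hq0
  have h7 : ‖expReward φ r θ' • (meanFeat φ θ - meanFeat φ θ')‖ ≤ q * B := by
    rw [norm_smul, Real.norm_eq_abs]
    exact (mul_le_of_le_one_left (norm_nonneg _) h4).trans h2
  rw [h5]
  refine (norm_sub_le _ _).trans ?_
  have h8 := norm_sub_le (∑ y, policy φ θ y • r y • φ y - ∑ y, policy φ θ' y • r y • φ y)
    ((expReward φ r θ - expReward φ r θ') • meanFeat φ θ)
  nlinarith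

end helpers

theorem tv_closeness_of_low_prob_errors {Y : Type*} [Fintype Y] [Nonempty Y] {D : ℕ}
    (φ : Y → EuclideanSpace ℝ (Fin D)) (hφ : ∀ y, φ y ≠ 0)
    (rP rG : Y → ℝ) (hrP : ∀ y, rP y ∈ Set.Icc (-1 : ℝ) 1)
    (hrG : ∀ y, rG y ∈ Set.Icc (-1 : ℝ) 1)
    (Z : Finset Y) (hZne : Z.Nonempty)
    (hagree : ∀ y : Y, y ∉ Z → rP y = rG y)
    (θt θGt : ℝ → EuclideanSpace ℝ (Fin D))
    (hflowP : ∀ t : ℝ, 0 ≤ t → HasDerivAt θt (gradient (expReward φ rP) (θt t)) t)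
    (hflowG : ∀ t : ℝ, 0 ≤ t → HasDerivAt θGt (gradient (expReward φ rG) (θGt t)) t)
    (hinit : θt 0 = θGt 0)
    (B ΔZ : ℝ)
    (hB : B = Finset.univ.sup' Finset.univ_nonempty fun y => ‖φ y‖)
    (hΔZ : ΔZ = Z.sup' hZne fun y => |rP y - rG y|)
    (T ε : ℝ) (hT : 0 ≤ T) (hε : 0 < ε)
    (hcond : ΔZ * (∑ y ∈ Z, policy φ (θt 0) y) * Real.exp (10 * B ^ 2 * T) ≤ 2 * ε) :
    ∀ t ∈ Set.Icc (0 : ℝ) T,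
      (1 / 2) * ∑ y, |policy φ (θt t) y - policy φ (θGt t) y| ≤ ε := by
  have hBy : ∀ y, ‖φ y‖ ≤ B := fun y => by
    rw [hB]
    exact Finset.le_sup' (fun y => ‖φ y‖) (Finset.mem_univ y)
  have hBpos : 0 < B :=
    (norm_pos_iff.2 (hφ (Classical.arbitrary Y))).trans_le (hBy _)
  have hΔ : ∀ y ∈ Z, |rP y - rG y| ≤ ΔZ := fun y hy => by
    rw [hΔZ]
    exact Finset.le_sup' (fun y => |rP y - rG y|) hy
  have hΔ0 : 0 ≤ ΔZ := by
    obtain ⟨y, hy⟩ := hZne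
    exact (abs_nonneg _).trans (hΔ y hy)
  have hP1 : ∀ y, |rP y| ≤ 1 := fun y => abs_le.2 (hrP y)
  have hG1 : ∀ y, |rG y| ≤ 1 := fun y => abs_le.2 (hrG y)
  have hdP : ∀ t : ℝ, 0 ≤ t → HasDerivAt θt (gradV φ rP (θt t)) t := fun t ht => by
    have := hflowP t ht
    rwa [(hasGrad_expReward φ rP (θt t)).gradient] at this
  have hdG : ∀ t : ℝ, 0 ≤ t → HasDerivAt θGt (gradV φ rG (θGt t)) t := fun t ht => by
    have := hflowG t ht
    rwa [(hasGrad_expReward φ rG (θGt t)).gradient] at this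
  classical
  -- growth of the mass of Z
  set ind : Y → ℝ := fun y => if y ∈ Z then 1 else 0 with hind
  have hpZ : ∀ θ, expReward φ ind θ = ∑ y ∈ Z, policy φ θ y := fun θ => by
    simp [expReward, hind]
  have hpZ' : ∀ θ, ∑ y, policy φ θ y * |ind y| = expReward φ ind θ := fun θ => by
    refine Finset.sum_congr rfl fun y _ => ?_
    simp only [hind]
    split_ifs <;> simp
  have hp0 : ∀ θ, 0 ≤ expReward φ ind θ := fun θ => by
    rw [hpZ]
    exact Finset.sum_nonneg fun y _ => policy_nonneg φ θ y
  have hdp : ∀ t : ℝ, 0 ≤ t → HasDerivAt (fun t => expReward φ ind (θt t))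
      ⟪gradV φ ind (θt t), gradV φ rP (θt t)⟫ t := fun t ht => by
    have h := (hasGradientAt_iff_hasFDerivAt.1
      (hasGrad_expReward φ ind (θt t))).comp_hasDerivAt t (hdP t ht)
    exact h
  have hgrow : ∀ t ∈ Set.Icc (0 : ℝ) T,
      expReward φ ind (θt t) ≤ expReward φ ind (θt 0) * Real.exp (4 * B ^ 2 * T) := by
    intro t ht
    have h := norm_le_gronwallBound_of_norm_deriv_right_le
      (f := fun t => expReward φ ind (θt t)) (δ := expReward φ ind (θt 0))
      (K := 4 * B ^ 2) (ε := 0) (a := 0) (b := T)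
      (fun s hs => (hdp s hs.1).continuousAt.continuousWithinAt)
      (fun s hs => (hdp s hs.1).hasDerivWithinAt)
      (by rw [Real.norm_of_nonneg (hp0 _)])
      (fun s hs => by
        rw [Real.norm_of_nonneg (hp0 _), add_zero]
        refine (norm_inner_le_norm _ _).trans ?_
        have h1 := norm_gradV_le φ hBy ind (θt s)
        rw [hpZ'] at h1
        have h2 := norm_gradV_le' φ hBy rP hP1 (θt s)
        calc _ ≤ (2 * B * expReward φ ind (θt s)) * (2 * B) :=
              mul_le_mul h1 h2 (norm_nonneg _)
                (mul_nonneg (by positivity) (hp0 _))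
          _ = _ := by ring) t ht
    rw [Real.norm_of_nonneg (hp0 _), gronwallBound_ε0, sub_zero] at h
    refine h.trans (mul_le_mul_of_nonneg_left ?_ (hp0 _))
    exact Real.exp_le_exp.2 (mul_le_mul_of_nonneg_left ht.2 (by positivity))
  set p0 := expReward φ ind (θt 0) with hp0def
  have hp0nn : 0 ≤ p0 := hp0 _
  set E4 := Real.exp (4 * B ^ 2 * T) with hE4
  have hE4pos : 0 < E4 := Real.exp_pos _
  intro t ht
  have hmain := norm_le_gronwallBound_of_norm_deriv_right_le
      (f := fun t => θt t - θGt t) (δ := 0)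
      (K := 6 * B ^ 2) (ε := 2 * B * (ΔZ * (p0 * E4))) (a := 0) (b := T)
      (fun s hs => ((hdP s hs.1).sub (hdG s hs.1)).continuousAt.continuousWithinAt)
      (fun s hs => ((hdP s hs.1).sub (hdG s hs.1)).hasDerivWithinAt)
      (by simp [hinit])
      (fun s hs => by
        have e : gradV φ rP (θt s) - gradV φ rG (θGt s) =
            (gradV φ rG (θt s) - gradV φ rG (θGt s))
              + gradV φ (fun y => rP y - rG y) (θt s) := by
          have : gradV φ (fun y => rP y - rG y) (θt s)
              = gradV φ rP (θt s) - gradV φ rG (θt s) := by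
            simp only [gradV, mul_sub, sub_smul, Finset.sum_sub_distrib]
          rw [this]
          abel
        rw [e]
        refine (norm_add_le _ _).trans (add_le_add (gradV_lip φ hBy rG hG1 _ _) ?_)
        refine (norm_gradV_le φ hBy _ _).trans
          (mul_le_mul_of_nonneg_left ?_ (by positivity))
        calc ∑ y, policy φ (θt s) y * |rP y - rG y|
            ≤ ∑ y, ΔZ * (policy φ (θt s) y * ind y) := by
              refine Finset.sum_le_sum fun y _ => ?_
              by_cases hy : y ∈ Z
              · simp only [hind, hy, if_true, mul_one]
                rw [mul_comm]
                exact mul_le_mul_of_nonneg_right (hΔ y hy) (policy_nonneg φ _ y)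
              · simp [hind, hy, hagree y hy]
          _ = ΔZ * expReward φ ind (θt s) := by rw [← Finset.mul_sum, expReward]
          _ ≤ ΔZ * (p0 * E4) :=
              mul_le_mul_of_nonneg_left (hgrow s ⟨hs.1, hs.2.le⟩) hΔ0) t ht
  have hK : (6 * B ^ 2) ≠ 0 := by positivity
  rw [gronwallBound_of_K_ne_0 hK] at hmain
  beta_reduce at hmain
  rw [zero_mul, zero_add, sub_zero] at hmain
  have htv := tv_le φ hBy (θt t) (θGt t)
  rw [← hpZ, ← hp0def] at hcond
  have hexp : Real.exp (10 * B ^ 2 * T) = E4 * Real.exp (6 * B ^ 2 * T) := by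
    rw [hE4, ← Real.exp_add]
    congr 1
    ring
  have hmono : Real.exp (6 * B ^ 2 * t) ≤ Real.exp (6 * B ^ 2 * T) :=
    Real.exp_le_exp.2 (mul_le_mul_of_nonneg_left ht.2 (by positivity))
  have hX : 0 ≤ ΔZ * (p0 * E4) := by positivity
  have hfin : 2 * B * ‖θt t - θGt t‖ ≤ 2 / 3 * (ΔZ * (p0 * E4)) * (Real.exp (6 * B ^ 2 * t) - 1) := by
    calc _ ≤ 2 * B * (2 * B * (ΔZ * (p0 * E4)) / (6 * B ^ 2) * (Real.exp (6 * B ^ 2 * t) - 1)) :=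
          mul_le_mul_of_nonneg_left hmain (by positivity)
      _ = _ := by
        field_simp
        ring
  rw [hexp] at hcond
  have h9 : 2 / 3 * (ΔZ * (p0 * E4)) * (Real.exp (6 * B ^ 2 * t) - 1)
      ≤ ΔZ * (p0 * E4) * Real.exp (6 * B ^ 2 * T) := by
    have hpos := Real.exp_pos (6 * B ^ 2 * T)
    have : 2 / 3 * (Real.exp (6 * B ^ 2 * t) - 1) ≤ Real.exp (6 * B ^ 2 * T) := by linarith
    nlinarith [mul_le_mul_of_nonneg_left this hX]
  have h10 : ΔZ * (p0 * E4) * Real.exp (6 * B ^ 2 * T) =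
      ΔZ * p0 * (E4 * Real.exp (6 * B ^ 2 * T)) := by ring
  linarith
end

section
/- Assume the feature vectors {φ(y)}_{y∈Y} are orthonormal, the ground truth reward r_G satisfies the reward structure assumption, and the initial parameters θ_0 satisfy the initial policy assumption (orthonormal case). Let ε ∈ (0, Δ1), and suppose θ_t is the gradient flow maximizing V_G. Then any time t with V_G(θ_t) ≥ r_G(y_⋆) − ε satisfies t ≥ [2√2 · M^{14/13} · Δ1 · r_G(y_med) · (1 − e^{−√2(Δ1 − ε)})] / [(Δ1 + Δ2)(1 + 8Δ1)] · π_{θ_0}(y_⋆)^{−14/13}. -/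
open scoped BigOperators RealInnerProductSpace

lemma first_hit (F : ℝ → ℝ) (a t c : ℝ) (hat : a ≤ t) (hF : ContinuousOn F (Set.Icc a t))
    (ht : c ≤ F t) : ∃ T ∈ Set.Icc a t, c ≤ F T ∧ ∀ s ∈ Set.Ico a T, F s < c := by
  have hcl : IsClosed (Set.Icc a t ∩ F ⁻¹' Set.Ici c) :=
    hF.preimage_isClosed_of_isClosed isClosed_Icc isClosed_Ici
  have hK : IsCompact (Set.Icc a t ∩ F ⁻¹' Set.Ici c) :=
    isCompact_Icc.of_isClosed_subset hcl Set.inter_subset_left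
  obtain ⟨T, ⟨hT1, hT2⟩, hT3⟩ := hK.exists_isLeast ⟨t, ⟨hat, le_rfl⟩, ht⟩
  refine ⟨T, hT1, hT2, fun s hs => ?_⟩
  by_contra h
  push Not at h
  have := hT3 (show s ∈ Set.Icc a t ∩ F ⁻¹' Set.Ici c from ⟨⟨hs.1, hs.2.le.trans hT1.2⟩, h⟩)
  linarith [hs.2]

lemma anti_of_deriv (f fd : ℝ → ℝ) (a b : ℝ) (hab : a ≤ b)
    (hf : ∀ s ∈ Set.Icc a b, HasDerivAt f (fd s) s) (h : ∀ s ∈ Set.Ioo a b, fd s ≤ 0) :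
    f b ≤ f a := by
  have : AntitoneOn f (Set.Icc a b) := by
    apply antitoneOn_of_deriv_nonpos (convex_Icc a b)
    · exact fun s hs => (hf s hs).continuousAt.continuousWithinAt
    · intro s hs
      rw [interior_Icc] at hs
      exact (hf s (Set.Ioo_subset_Icc_self hs)).differentiableAt.differentiableWithinAt
    · intro s hs
      rw [interior_Icc] at hs
      rw [(hf s (Set.Ioo_subset_Icc_self hs)).deriv]; exact h s hs
  exact this ⟨le_rfl, hab⟩ ⟨hab, le_rfl⟩ hab

lemma phase2 (w b m : ℝ → ℝ) (D1 D2 T t : ℝ) (hT : 0 ≤ T) (hTt : T ≤ t) (hD1 : 0 < D1) (hD2 : 0 < D2)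
    (hw : ∀ s, 0 < w s) (hb : ∀ s, 0 < b s) (hm : ∀ s, 0 < m s) (hm1 : ∀ s, m s ≤ 1)
    (dw : ∀ s, 0 ≤ s → HasDerivAt w
      (w s * m s ^ 2 * (D1 * w s * (2 + b s) - D2 * b s * (1 - w s))) s)
    (h1 : 2 * w T * (D1 + D2) ≤ D2) (h2 : 2 * w T ≤ w t) :
    1 / (4 * D1 * w T) ≤ t := by
  have cw : ∀ s, 0 ≤ s → ContinuousAt w s := fun s hs => (dw s hs).continuousAt
  obtain ⟨S, hS, hS1, hS2⟩ := first_hit w T t (2 * w T) hTt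
    (fun s hs => (cw s (hT.trans hs.1)).continuousWithinAt) h2
  have key := anti_of_deriv (fun s => - (w s)⁻¹ - 2 * D1 * s)
    (fun s => - (-(w s * m s ^ 2 * (D1 * w s * (2 + b s) - D2 * b s * (1 - w s))) / (w s) ^ 2) - 2 * D1)
    T S hS.1 (fun s hs => by
      have := (((dw s (hT.trans hs.1)).inv (hw s).ne').neg).sub ((hasDerivAt_id s).const_mul (2 * D1))
      exact this.congr_deriv (by ring)) (fun s hs => by
      have hlt := hS2 s ⟨hs.1.le, hs.2⟩
      have hws := hw s
      have hbs := hb s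
      have hms : m s ^ 2 ≤ 1 := pow_le_one₀ (hm s).le (hm1 s)
      have hms0 : 0 < m s ^ 2 := by have := hm s; positivity
      have e1 : D1 * w s * (2 + b s) - D2 * b s * (1 - w s) ≤ 2 * D1 * w s := by
        have : (D1 + D2) * w s ≤ D2 := by nlinarith
        nlinarith
      have e2 : w s * m s ^ 2 * (D1 * w s * (2 + b s) - D2 * b s * (1 - w s)) ≤ 2 * D1 * w s ^ 2 := by
        calc _ ≤ w s * m s ^ 2 * (2 * D1 * w s) := by gcongr
          _ = m s ^ 2 * (2 * D1 * w s ^ 2) := by ring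
          _ ≤ 1 * (2 * D1 * w s ^ 2) := by gcongr
          _ = _ := by ring
      rw [neg_div, neg_neg, sub_nonpos, div_le_iff₀ (by positivity)]
      exact e2)
  have hwT := hw T
  have e3 : (w S)⁻¹ ≤ (2 * w T)⁻¹ := by gcongr
  have e4 : (2 * w T)⁻¹ = (w T)⁻¹ / 2 := by field_simp
  have e5 : 1 / (4 * D1 * w T) = (w T)⁻¹ / (4 * D1) := by field_simp
  rw [e5, div_le_iff₀ (by positivity)]
  rw [e4] at e3
  nlinarith [hS.2]

lemma phase0 (w b bd m : ℝ → ℝ) (D1 D2 t : ℝ) (ht : 0 ≤ t) (hD1 : 0 < D1) (hD2 : 0 < D2)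
    (hK : D1 + D2 ≤ 2)
    (hw : ∀ s, 0 < w s) (hb : ∀ s, 0 < b s) (hm : ∀ s, 0 < m s)
    (hm1 : ∀ s, m s * (1 + w s + b s) = 1)
    (dw : ∀ s, 0 ≤ s → HasDerivAt w
      (w s * m s ^ 2 * (D1 * w s * (2 + b s) - D2 * b s * (1 - w s))) s)
    (db : ∀ s, 0 ≤ s → HasDerivAt b (bd s) s)
    (hbl : ∀ s, 0 ≤ s → - (b s * m s ^ 2 * (D2 * b s * (2 + w s) - D1 * w s * (1 - b s))) ≤ bd s)
    (h0 : D1 * w 0 ≤ 0.1 * (D2 * b 0)) (h1 : D2 * b t ≤ D1 * w t) : 1 / 2 ≤ t := by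
  by_contra hlt
  push Not at hlt
  have key := anti_of_deriv (fun s => Real.log (w s) - Real.log (b s) - 2 * s)
    (fun s => (w s * m s ^ 2 * (D1 * w s * (2 + b s) - D2 * b s * (1 - w s))) / w s - bd s / b s - 2)
    0 t ht (fun s hs => by
      have := (((dw s hs.1).log (hw s).ne').sub ((db s hs.1).log (hb s).ne')).sub
        ((hasDerivAt_id s).const_mul (2:ℝ))
      exact this.congr_deriv (by ring)) (fun s hs => by
      have hws := hw s
      have hbs := hb s
      have hms := hm s
      have h := hm1 s
      have e1 : (w s * m s ^ 2 * (D1 * w s * (2 + b s) - D2 * b s * (1 - w s))) / w s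
        = m s ^ 2 * (D1 * w s * (2 + b s) - D2 * b s * (1 - w s)) := by field_simp
      have e2 : - (m s ^ 2 * (D2 * b s * (2 + w s) - D1 * w s * (1 - b s))) ≤ bd s / b s := by
        rw [le_div_iff₀ hbs]
        linarith [hbl s hs.1.le]
      rw [e1]
      have hp : 0 < m s * w s := by positivity
      have hq : 0 < m s * b s := by positivity
      have e3 : m s + m s * w s + m s * b s = 1 := by linarith
      have e4 : m s ^ 2 * (D1 * w s * (2 + b s) - D2 * b s * (1 - w s)) +
          (m s ^ 2 * (D2 * b s * (2 + w s) - D1 * w s * (1 - b s))) =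
          D1 * (m s * (m s * w s) + 2 * ((m s * w s) * (m s * b s))) +
          D2 * (m s * (m s * b s) + 2 * ((m s * w s) * (m s * b s))) := by ring
      generalize m s * w s = x at *
      generalize m s * b s = y at *
      generalize m s = z at *
      have e5 : z * x + 2 * (x * y) ≤ 1 := by nlinarith [sq_nonneg (z-x), sq_nonneg (x-y)]
      have e6 : z * y + 2 * (x * y) ≤ 1 := by nlinarith [sq_nonneg (z-y), sq_nonneg (x-y)]
      nlinarith)
  have a1 : Real.log (D1 * w 0) ≤ Real.log (0.1 * (D2 * b 0)) :=
    Real.log_le_log (mul_pos hD1 (hw 0)) h0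
  have a2 : Real.log (D2 * b t) ≤ Real.log (D1 * w t) :=
    Real.log_le_log (mul_pos hD2 (hb t)) h1
  rw [Real.log_mul (by norm_num) (mul_pos hD2 (hb 0)).ne', Real.log_mul hD2.ne' (hb 0).ne',
    Real.log_mul hD1.ne' (hw 0).ne'] at a1
  rw [Real.log_mul hD1.ne' (hw t).ne', Real.log_mul hD2.ne' (hb t).ne'] at a2
  have a3 : Real.log 0.1 < -1 := by
    rw [Real.log_lt_iff_lt_exp (by norm_num), Real.exp_neg]
    rw [lt_inv_comm₀ (by norm_num) (Real.exp_pos _)]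
    have := Real.exp_one_lt_d9
    norm_num at *
    linarith
  linarith

lemma phase1 (w b bd m : ℝ → ℝ) (D1 D2 t : ℝ) (ht : 0 ≤ t) (hD1 : 0 < D1) (hD2 : 0 < D2)
    (hw : ∀ s, 0 < w s) (hb : ∀ s, 0 < b s) (hm : ∀ s, 0 < m s)
    (dw : ∀ s, 0 ≤ s → HasDerivAt w
      (w s * m s ^ 2 * (D1 * w s * (2 + b s) - D2 * b s * (1 - w s))) s)
    (db : ∀ s, 0 ≤ s → HasDerivAt b (bd s) s)
    (hbl : ∀ s, 0 ≤ s → - (b s * m s ^ 2 * (D2 * b s * (2 + w s) - D1 * w s * (1 - b s))) ≤ bd s)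
    (hbu : ∀ s, 0 ≤ s → bd s ≤ - (b s * m s ^ 2 * (D2 * b s - D1 * w s)))
    (hw0 : w 0 < 1 / 40) (hb0 : b 0 ≤ 1 / 8) (h1 : D2 * b t ≤ D1 * w t) :
    ∃ T ∈ Set.Icc 0 t, D2 * b T ≤ 5 * (D1 * w T) ∧ w T ^ 7 * b 0 ^ 2 ≤ w 0 ^ 7 * b T ^ 2 := by
  have cw : ∀ s, 0 ≤ s → ContinuousAt w s := fun s hs => (dw s hs).continuousAt
  have cb : ∀ s, 0 ≤ s → ContinuousAt b s := fun s hs => (db s hs).continuousAt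
  obtain ⟨T, hT, hT1, hT2⟩ := first_hit
    (fun s => max (5 * (D1 * w s) - D2 * b s) (w s - 1 / 40)) 0 t 0 ht
    (fun s hs => by
      have := cw s hs.1
      have := cb s hs.1
      apply ContinuousAt.continuousWithinAt
      fun_prop) (by
      apply le_max_of_le_left
      have := mul_pos hD1 (hw t)
      linarith)
  have hreg : ∀ s ∈ Set.Ico 0 T, 5 * (D1 * w s) < D2 * b s ∧ w s < 1 / 40 := by
    intro s hs
    have := hT2 s hs
    rw [max_lt_iff] at this
    constructor <;> linarith [this.1, this.2]
  have hbT : ∀ s ∈ Set.Icc 0 T, b s ≤ b 0 := by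
    intro s hs
    refine anti_of_deriv b bd 0 s hs.1 (fun u hu => db u hu.1) (fun u hu => ?_)
    refine (hbu u hu.1.le).trans ?_
    have := (hreg u ⟨hu.1.le, hu.2.trans_le hs.2⟩).1
    have h3 := mul_pos hD1 (hw u)
    have : 0 < b u * m u ^ 2 * (D2 * b u - D1 * w u) := by
      have := hb u
      have := hm u
      have : 0 < D2 * b u - D1 * w u := by linarith
      positivity
    linarith
  have hwT : w T ≤ w 0 := by
    refine anti_of_deriv w _ 0 T hT.1 (fun u hu => dw u hu.1) (fun u hu => ?_)
    have h2 := hreg u ⟨hu.1.le, hu.2⟩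
    have h4 := hbT u ⟨hu.1.le, hu.2.le⟩
    have h3 := mul_pos hD1 (hw u)
    have h5 := mul_pos hD2 (hb u)
    apply mul_nonpos_of_nonneg_of_nonpos
    · have := hw u
      positivity
    · generalize D1 * w u = x at *
      generalize D2 * b u = y at *
      nlinarith [hb u, hw u]
  refine ⟨T, hT, ?_, ?_⟩
  · rcases le_max_iff.1 hT1 with h | h <;> linarith
  · have key := anti_of_deriv (fun s => 7 * Real.log (w s) - 2 * Real.log (b s))
      (fun s => 7 * ((w s * m s ^ 2 * (D1 * w s * (2 + b s) - D2 * b s * (1 - w s))) / w s) - 2 * (bd s / b s))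
      0 T hT.1 (fun s hs => 
        (((dw s hs.1).log (hw s).ne').const_mul 7).sub (((db s hs.1).log (hb s).ne').const_mul 2)) (fun s hs => by
        have hws := hw s
        have hbs := hb s
        have hms := hm s
        have e1 : (w s * m s ^ 2 * (D1 * w s * (2 + b s) - D2 * b s * (1 - w s))) / w s
          = m s ^ 2 * (D1 * w s * (2 + b s) - D2 * b s * (1 - w s)) := by field_simp
        have e2 : - (m s ^ 2 * (D2 * b s * (2 + w s) - D1 * w s * (1 - b s))) ≤ bd s / b s := by
          rw [le_div_iff₀ hbs]
          linarith [hbl s hs.1.le]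
        rw [e1]
        have h2 := hreg s ⟨hs.1.le, hs.2⟩
        have h4 := hbT s ⟨hs.1.le, hs.2.le⟩
        have h3 := mul_pos hD1 hws
        have h5 := mul_pos hD2 hbs
        have e3 : m s ^ 2 * (D1 * w s * (12 + 9 * b s) - D2 * b s * (3 - 9 * w s)) ≤ 0 := by
          apply mul_nonpos_of_nonneg_of_nonpos (by positivity)
          generalize D1 * w s = x at *
          generalize D2 * b s = y at *
          nlinarith
        linarith)
    have h0 := hw 0
    have h1 := hw T
    have h2 := hb 0
    have h3 := hb T
    rw [← Real.log_le_log_iff (by positivity) (by positivity), Real.log_mul (by positivity) (by positivity),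
      Real.log_mul (by positivity) (by positivity)]
    simp only [Real.log_pow]
    push_cast
    linarith

lemma alg1 (a M μ rm K D1 D2 p0 w0 w1 b0 b1 : ℝ) (ha : 0 < a) (hM : 0 < M)
    (hrm : 0 < rm) (hμ7 : μ ^ 7 = rm ^ 2) (hD1 : 0 < D1) (hD2 : 0 < D2) (hK : K = D1 + D2)
    (hMK : M * K ≤ 0.05 * μ) (hp : p0 = M * a ^ 13) (ha1 : a ^ 14 < 0.01) (ha2 : a ^ 14 < D2 ^ 2)
    (hw0 : 0 < w0) (hw1 : 0 < w1) (hb1 : 0 < b1) (hwp : w0 ≤ 2 * p0) (hb0 : 0.05 * rm ≤ b0)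
    (h1 : w1 ^ 7 * b0 ^ 2 ≤ w0 ^ 7 * b1 ^ 2) (h2 : D2 * b1 ≤ 5 * (D1 * w1)) :
    K * w1 ≤ a ^ 14 / 2 := by
  have hKp : 0 < K := by linarith
  have hp0 : 0 < p0 := by rw [hp]; positivity
  have hal : a ≤ 1 := by
    by_contra h
    push Not at h
    have := one_le_pow₀ h.le (n := 14)
    linarith
  have e1 : (D2 * b1) ^ 2 ≤ (5 * (K * w1)) ^ 2 := by
    have : D2 * b1 ≤ 5 * (K * w1) := by
      have := mul_pos hD2 hw1
      rw [hK]; linarith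
    gcongr
  have e2 : w0 ^ 7 ≤ (2 * p0) ^ 7 := by gcongr
  have e3 : (0.05 * rm) ^ 2 ≤ b0 ^ 2 := by gcongr
  have e4 : (M * K) ^ 7 ≤ (0.05 * μ) ^ 7 := by gcongr
  have e5 : w1 ^ 7 * b0 ^ 2 * D2 ^ 2 ≤ (2 * p0) ^ 7 * (5 * (K * w1)) ^ 2 := by
    calc _ ≤ w0 ^ 7 * b1 ^ 2 * D2 ^ 2 := by gcongr
      _ = w0 ^ 7 * (D2 * b1) ^ 2 := by ring
      _ ≤ _ := by gcongr
  have e6 : w1 ^ 7 * (0.05 * rm) ^ 2 * a ^ 14 ≤ w1 ^ 7 * b0 ^ 2 * D2 ^ 2 := by gcongr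
  have e7 : (K * w1) ^ 5 * ((w1 * rm) ^ 2 * a ^ 14) ≤ (0.001 * a ^ 77) * ((w1 * rm) ^ 2 * a ^ 14) := by
    have e8 : K ^ 5 * (w1 ^ 7 * (0.05 * rm) ^ 2 * a ^ 14) ≤ K ^ 5 * ((2 * p0) ^ 7 * (5 * (K * w1)) ^ 2) := by
      exact mul_le_mul_of_nonneg_left (e6.trans e5) (by positivity)
    have e9 : K ^ 5 * ((2 * p0) ^ 7 * (5 * (K * w1)) ^ 2) = 3200 * (M * K) ^ 7 * a ^ 91 * w1 ^ 2 := by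
      rw [hp]; ring
    have e10 : 3200 * (M * K) ^ 7 * a ^ 91 * w1 ^ 2 ≤ 3200 * (0.05 * μ) ^ 7 * a ^ 91 * w1 ^ 2 := by gcongr
    have e11 : 3200 * (0.05 * μ) ^ 7 * a ^ 91 * w1 ^ 2 = 3200 * 0.05 ^ 7 * rm ^ 2 * a ^ 91 * w1 ^ 2 := by
      rw [mul_pow, hμ7]; ring
    have e12 : K ^ 5 * (w1 ^ 7 * (0.05 * rm) ^ 2 * a ^ 14) = 0.0025 * ((K * w1) ^ 5 * ((w1 * rm) ^ 2 * a ^ 14)) := by ring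
    have e13 : 3200 * 0.05 ^ 7 * rm ^ 2 * a ^ 91 * w1 ^ 2 = 0.0025 * ((0.001 * a ^ 77) * ((w1 * rm) ^ 2 * a ^ 14)) := by ring
    linarith
  have e8 := le_of_mul_le_mul_right e7 (by positivity)
  have e9 : (K * w1) ^ 5 ≤ (a ^ 14 / 2) ^ 5 := by
    refine e8.trans ?_
    have : a ^ 77 ≤ a ^ 70 := pow_le_pow_of_le_one ha.le hal (by norm_num)
    have h70 : 0 < a ^ 70 := by positivity
    have : (a ^ 14 / 2) ^ 5 = a ^ 70 / 32 := by ring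
    linarith
  exact (pow_le_pow_iff_left₀ (by positivity) (by positivity) (by norm_num)).1 e9

lemma constC (D1 D2 rm δ : ℝ) (hD1 : 0 < D1) (hD2 : 0 < D2) (hrm : 0 < rm) (hrmD : rm ≤ D2)
    (hδ : 0 < δ) :
    2 * Real.sqrt 2 * D1 * rm * (1 - Real.exp (-(Real.sqrt 2 * δ))) / ((D1 + D2) * (1 + 8 * D1)) ≤ δ / 2 := by
  have s1 : 1 - Real.exp (-(Real.sqrt 2 * δ)) ≤ Real.sqrt 2 * δ := by
    linarith [Real.add_one_le_exp (-(Real.sqrt 2 * δ))]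
  have s2 : Real.sqrt 2 * Real.sqrt 2 = 2 := Real.mul_self_sqrt (by norm_num)
  rw [div_le_iff₀ (by positivity)]
  have s0 : 0 < (D1 + D2) * δ := by positivity
  calc _ ≤ 2 * Real.sqrt 2 * D1 * rm * (Real.sqrt 2 * δ) := by gcongr
    _ = 4 * D1 * rm * δ := by linear_combination (2 * D1 * rm * δ) * s2
    _ ≤ 4 * D1 * (D1 + D2) * δ := by gcongr; linarith
    _ ≤ _ := by linarith

set_option maxHeartbeats 1000000 in
lemma core (w b bd m : ℝ → ℝ) (D1 D2 t a M μ rm p0 δ : ℝ) (ht : 0 ≤ t) (hD1 : 0 < D1) (hD2 : 0 < D2)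
    (hK : D1 + D2 ≤ 2)
    (hw : ∀ s, 0 < w s) (hb : ∀ s, 0 < b s) (hm : ∀ s, 0 < m s)
    (hm1 : ∀ s, m s * (1 + w s + b s) = 1)
    (dw : ∀ s, 0 ≤ s → HasDerivAt w
      (w s * m s ^ 2 * (D1 * w s * (2 + b s) - D2 * b s * (1 - w s))) s)
    (db : ∀ s, 0 ≤ s → HasDerivAt b (bd s) s)
    (hbl : ∀ s, 0 ≤ s → - (b s * m s ^ 2 * (D2 * b s * (2 + w s) - D1 * w s * (1 - b s))) ≤ bd s)
    (hbu : ∀ s, 0 ≤ s → bd s ≤ - (b s * m s ^ 2 * (D2 * b s - D1 * w s)))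
    (ha : 0 < a) (hM : 0 < M) (hM1 : M ≤ 1) (hμ1 : μ ≤ 1)
    (hrm : 0 < rm) (hrm1 : rm ≤ 1) (hrmD : rm ≤ D2) (hμ7 : μ ^ 7 = rm ^ 2)
    (hMK : M * (D1 + D2) ≤ 0.05 * μ) (hp : p0 = M * a ^ 13) (ha1 : a ^ 14 < 0.01) (ha2 : a ^ 14 < D2 ^ 2)
    (hp0 : p0 = m 0 * w 0) (hb01 : m 0 * b 0 ≤ 0.1 * rm) (hb02 : 0.05 * rm ≤ m 0 * b 0)
    (hb03 : 2 * a ^ 7 ≤ D2 * (m 0 * b 0))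
    (hδ : 0 < δ) (hδ1 : δ < D1) (hδ2 : δ ≤ 1) (hend : δ ≤ m t * (D1 * w t - D2 * b t)) :
    2 * Real.sqrt 2 * D1 * rm * (1 - Real.exp (-(Real.sqrt 2 * δ))) / ((D1 + D2) * (1 + 8 * D1)) * (a ^ 14)⁻¹ ≤ t := by
  have hal : a ≤ 1 := by
    by_contra h
    push Not at h
    have := one_le_pow₀ h.le (n := 14)
    linarith
  have hmle : ∀ s, m s ≤ 1 := by
    intro s
    have := hm1 s
    have h1 := mul_pos (hm s) (hw s)
    have h2 := mul_pos (hm s) (hb s)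
    linarith
  have hx : 0 < D1 * w t - D2 * b t := by
    by_contra h
    push Not at h
    nlinarith [hm t]
  have hend2 : D2 * b t + δ ≤ D1 * w t := by nlinarith [hmle t]
  have h1 : D2 * b t ≤ D1 * w t := by linarith
  have hp0pos : 0 < p0 := by rw [hp]; positivity
  have ha13 : a ^ 13 ≤ 0.02 := by
    by_contra h
    push Not at h
    have h1 : (0.02 : ℝ) ^ 14 < (a ^ 13) ^ 14 := by gcongr
    have h2 : (a ^ 14) ^ 13 < (0.01 : ℝ) ^ 13 := by gcongr
    have h3 : (a ^ 14) ^ 13 = (a ^ 13) ^ 14 := by ring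
    norm_num at h1 h2
    linarith
  have hp02 : p0 ≤ 0.02 := by
    rw [hp]
    have : 0 < a ^ 13 := by positivity
    nlinarith
  have hm0 : 0.88 ≤ m 0 := by
    have := hm1 0
    linarith
  have hw0 : w 0 < 1 / 40 := by
    have := mul_le_mul_of_nonneg_right hm0 (hw 0).le
    linarith
  have hb0 : b 0 ≤ 1 / 8 := by
    have := mul_le_mul_of_nonneg_right hm0 (hb 0).le
    linarith
  have hwp : w 0 ≤ 2 * p0 := by
    have := mul_le_mul_of_nonneg_right hm0 (hw 0).le
    linarith [hw 0]
  have hbm : 0.05 * rm ≤ b 0 := by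
    have := mul_le_mul_of_nonneg_right (hmle 0) (hb 0).le
    linarith
  have hr0 : D1 * w 0 ≤ 0.1 * (D2 * b 0) := by
    have q1 : D1 * p0 ≤ 0.05 * a ^ 13 := by
      have q : M * D1 ≤ 0.05 := by nlinarith [mul_pos hM hD2]
      have : 0 < a ^ 13 := by positivity
      rw [hp]
      nlinarith
    have q2 : a ^ 13 ≤ a ^ 7 := pow_le_pow_of_le_one ha.le hal (by norm_num)
    have q3 : 0 < a ^ 7 := by positivity
    have q4 : m 0 * (D1 * w 0) ≤ m 0 * (0.1 * (D2 * b 0)) := by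
      rw [hp0] at q1
      linarith
    exact le_of_mul_le_mul_left q4 (hm 0)
  have thalf := phase0 w b bd m D1 D2 t ht hD1 hD2 hK hw hb hm hm1 dw db hbl hr0 h1
  obtain ⟨T, hT, hT1, hT2⟩ := phase1 w b bd m D1 D2 t ht hD1 hD2 hw hb hm dw db hbl hbu hw0 hb0 h1
  have hKw := alg1 a M μ rm (D1 + D2) D1 D2 p0 (w 0) (w T) (b 0) (b T) ha hM hrm hμ7 hD1 hD2 rfl hMK hp ha1 ha2
    (hw 0) (hw T) (hb T) hwp hbm hT2 hT1
  have hq : 0 < a ^ 14 := by positivity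
  have hwT := hw T
  have hDw : D1 * w T ≤ a ^ 14 / 2 := by linarith [mul_pos hD2 hwT]
  set C := 2 * Real.sqrt 2 * D1 * rm * (1 - Real.exp (-(Real.sqrt 2 * δ))) / ((D1 + D2) * (1 + 8 * D1)) with hC
  have hC1 : C ≤ δ / 2 := constC D1 D2 rm δ hD1 hD2 hrm hrmD hδ
  rw [← div_eq_mul_inv, div_le_iff₀ hq]
  by_cases hcase : 2 * w T ≤ w t
  · have h2 : 2 * w T * (D1 + D2) ≤ D2 := by
      have : a ^ 14 ≤ D2 := by
        by_contra h
        push Not at h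
        nlinarith
      linarith
    have := phase2 w b m D1 D2 T t hT.1 hT.2 hD1 hD2 hw hb hm hmle dw h2 hcase
    rw [div_le_iff₀ (by positivity)] at this
    have := mul_le_mul_of_nonneg_left hDw ht
    linarith
  · push Not at hcase
    have : δ ≤ 2 * (D1 * w T) := by
      have := mul_pos hD2 (hb t)
      have := mul_lt_mul_of_pos_left hcase hD1
      linarith
    have := mul_le_mul_of_nonneg_right thalf hq.le
    linarith

lemma inner_gradient {Y : Type*} [Fintype Y] [Nonempty Y] {D : ℕ}
    (φ : Y → EuclideanSpace ℝ (Fin D)) (horth : Orthonormal ℝ φ)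
    (r : Y → ℝ) (θ : EuclideanSpace ℝ (Fin D)) (y : Y) :
    ⟪φ y, gradient (expReward φ r) θ⟫ = policy φ θ y * (r y - expReward φ r θ) := by
  classical
  have hZ : ∀ θ, 0 < ∑ z, Real.exp ⟪φ z, θ⟫ := fun θ =>
    Finset.sum_pos (fun z _ => Real.exp_pos _) Finset.univ_nonempty
  have hV : ∀ θ, expReward φ r θ = (∑ z, Real.exp ⟪φ z, θ⟫ * r z) / ∑ z, Real.exp ⟪φ z, θ⟫ := by
    intro θ
    unfold expReward policy
    rw [Finset.sum_div]
    exact Finset.sum_congr rfl (fun z _ => by ring)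
  have hd : DifferentiableAt ℝ (expReward φ r) θ := by
    rw [funext hV]
    have := (hZ θ).ne'
    have hi : ∀ z, DifferentiableAt ℝ (fun x => Real.exp ⟪φ z, x⟫) θ := fun z =>
      ((innerSL ℝ (φ z)).differentiableAt (x := θ)).exp
    have hn : DifferentiableAt ℝ (fun x => ∑ z, Real.exp ⟪φ z, x⟫ * r z) θ :=
      DifferentiableAt.fun_sum (fun z _ => (hi z).mul_const (r z))
    have hz : DifferentiableAt ℝ (fun x => ∑ z, Real.exp ⟪φ z, x⟫) θ :=
      DifferentiableAt.fun_sum (fun z _ => hi z)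
    simp only [div_eq_mul_inv]
    exact hn.fun_mul (hz.fun_inv this)
  have h1 : ⟪φ y, gradient (expReward φ r) θ⟫ = fderiv ℝ (expReward φ r) θ (φ y) := by
    rw [real_inner_comm, inner_gradient_left]
  have hline : HasDerivAt (fun h : ℝ => θ + h • φ y) (φ y) 0 := by
    simpa using ((hasDerivAt_id (0:ℝ)).smul_const (φ y)).const_add θ
  have h2 : HasDerivAt (fun h : ℝ => expReward φ r (θ + h • φ y)) (fderiv ℝ (expReward φ r) θ (φ y)) 0 := by
    have hd2 : HasFDerivAt (expReward φ r) (fderiv ℝ (expReward φ r) θ) (θ + (0:ℝ) • φ y) := by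
      simpa using hd.hasFDerivAt
    exact hd2.comp_hasDerivAt 0 hline
  have hE : ∀ z, HasDerivAt (fun h : ℝ => Real.exp ⟪φ z, θ + h • φ y⟫)
      (if z = y then Real.exp ⟪φ y, θ⟫ else 0) 0 := by
    intro z
    have e : HasDerivAt (fun h : ℝ => ⟪φ z, θ + h • φ y⟫) (if z = y then 1 else 0 : ℝ) 0 := by
      have : (fun h : ℝ => ⟪φ z, θ + h • φ y⟫) = fun h => ⟪φ z, θ⟫ + h * (if z = y then 1 else 0 : ℝ) := by
        funext h
        rw [inner_add_right, inner_smul_right, orthonormal_iff_ite.1 horth]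
      rw [this]
      simpa using ((hasDerivAt_id (0:ℝ)).mul_const (if z = y then 1 else 0 : ℝ)).const_add ⟪φ z, θ⟫
    refine e.exp.congr_deriv ?_
    split_ifs with h
    · simp [h]
    · simp
  have hN : HasDerivAt (fun h : ℝ => ∑ z, Real.exp ⟪φ z, θ + h • φ y⟫ * r z)
      (Real.exp ⟪φ y, θ⟫ * r y) 0 := by
    refine (HasDerivAt.fun_sum (fun z _ => (hE z).mul_const (r z))).congr_deriv ?_
    simp
  have hZd : HasDerivAt (fun h : ℝ => ∑ z, Real.exp ⟪φ z, θ + h • φ y⟫)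
      (Real.exp ⟪φ y, θ⟫) 0 := by
    refine (HasDerivAt.fun_sum (fun z _ => (hE z))).congr_deriv ?_
    simp
  have h3 := hN.fun_div hZd (hZ _).ne'
  simp only [← hV] at h3
  rw [h1, h2.unique h3, hV]
  simp only [zero_smul, add_zero]
  unfold policy
  have := (hZ θ).ne'
  field_simp

/-- Differential identities for the ratios. -/
lemma ratios {Y : Type*} [Fintype Y] {D : ℕ}
    (φ : Y → EuclideanSpace ℝ (Fin D))
    (rG : Y → ℝ)
    (ystar ymed ybad : Y) (Ybad : Finset Y)
    (hsm : ystar ≠ ymed) (hsb : ystar ∉ Ybad) (hmb : ymed ∉ Ybad)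
    (hcover : ∀ y : Y, y = ystar ∨ y = ymed ∨ y ∈ Ybad)
    (hr4 : ∀ y ∈ Ybad, rG y = rG ybad) (θ : EuclideanSpace ℝ (Fin D)) (w b m : ℝ)
    (hw : w = Real.exp (⟪φ ystar, θ⟫ - ⟪φ ymed, θ⟫))
    (hb : b = ∑ y ∈ Ybad, Real.exp (⟪φ y, θ⟫ - ⟪φ ymed, θ⟫))
    (hm : m = policy φ θ ymed) :
    0 < m ∧ m * (1 + w + b) = 1 ∧ policy φ θ ystar = m * w ∧
    (∀ y, policy φ θ y = m * Real.exp (⟪φ y, θ⟫ - ⟪φ ymed, θ⟫)) ∧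
    ∑ y ∈ Ybad, policy φ θ y = m * b ∧
    expReward φ rG θ = m * (w * rG ystar + rG ymed + b * rG ybad) := by
  classical
  have hZ : 0 < ∑ z, Real.exp ⟪φ z, θ⟫ :=
    Finset.sum_pos (fun z _ => Real.exp_pos _) ⟨ymed, Finset.mem_univ _⟩
  have huniv : (Finset.univ : Finset Y) = insert ystar (insert ymed Ybad) := by
    ext y
    simpa using hcover y
  have hsum : ∀ f : Y → ℝ, ∑ y, f y = f ystar + (f ymed + ∑ y ∈ Ybad, f y) := by
    intro f
    rw [huniv, Finset.sum_insert (by simp [hsm, hsb]), Finset.sum_insert hmb]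
  have hpol : ∀ y, policy φ θ y = m * Real.exp (⟪φ y, θ⟫ - ⟪φ ymed, θ⟫) := by
    intro y
    rw [hm, Real.exp_sub]
    unfold policy
    have := Real.exp_pos ⟪φ ymed, θ⟫
    field_simp
  have hmpos : 0 < m := by
    rw [hm]
    exact div_pos (Real.exp_pos _) hZ
  have hone : ∑ y, policy φ θ y = 1 := by
    unfold policy
    rw [← Finset.sum_div, div_self hZ.ne']
  have hbs : ∑ y ∈ Ybad, policy φ θ y = m * b := by
    rw [hb, Finset.mul_sum]
    exact Finset.sum_congr rfl (fun y _ => hpol y)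
  have hps : policy φ θ ystar = m * w := by rw [hpol, hw]
  refine ⟨hmpos, ?_, hps, hpol, hbs, ?_⟩
  · rw [hsum, hbs, hps, ← hm] at hone
    linarith
  · unfold expReward
    rw [hsum, hps, ← hm]
    have : ∑ y ∈ Ybad, policy φ θ y * rG y = m * b * rG ybad := by
      rw [← hbs, Finset.sum_mul]
      exact Finset.sum_congr rfl (fun y hy => by rw [hr4 y hy])
    rw [this]
    ring

theorem slow_opt_orthonormal {Y : Type*} [Fintype Y] {D : ℕ}
    (φ : Y → EuclideanSpace ℝ (Fin D)) (hφ : ∀ y, φ y ≠ 0)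
    (horth : Orthonormal ℝ φ)
    (rG : Y → ℝ) (hrG : ∀ y, rG y ∈ Set.Icc (-1 : ℝ) 1)
    (ystar ymed ybad : Y) (Ybad : Finset Y) (hybad : ybad ∈ Ybad)
    (hsm : ystar ≠ ymed) (hsb : ystar ∉ Ybad) (hmb : ymed ∉ Ybad)
    (hcover : ∀ y : Y, y = ystar ∨ y = ymed ∨ y ∈ Ybad)
    (hr1 : rG ymed < rG ystar) (hr2 : 0 < rG ymed)
    (hr3 : ∀ y ∈ Ybad, rG y ≤ 0)
    (hr4 : ∀ y ∈ Ybad, rG y = rG ybad)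
    (Δ1 Δ2 : ℝ) (hΔ1 : Δ1 = rG ystar - rG ymed) (hΔ2 : Δ2 = rG ymed - rG ybad)
    (θt : ℝ → EuclideanSpace ℝ (Fin D))
    (hflow : ∀ t : ℝ, 0 ≤ t → HasDerivAt θt (gradient (expReward φ rG) (θt t)) t)
    (M : ℝ) (hM : M = min 1 (0.05 * rG ymed ^ ((2:ℝ)/7) / (Δ1 + Δ2)))
    (hinit1 : policy φ (θt 0) ystar
        < M * (min 0.01 (min ((21 / (1100 * (Δ1 + Δ2))) ^ ((7:ℝ)/3)) (Δ2 ^ 2))) ^ ((13:ℝ)/14))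
    (hinit2 : max (2 * policy φ (θt 0) ystar ^ ((7:ℝ)/13) / (Δ2 * M ^ ((7:ℝ)/13)))
        (0.05 * rG ymed) ≤ ∑ y ∈ Ybad, policy φ (θt 0) y)
    (hinit3 : ∑ y ∈ Ybad, policy φ (θt 0) y ≤ 0.1 * rG ymed)
    (ε : ℝ) (hε : ε ∈ Set.Ioo 0 Δ1)
    (t : ℝ) (ht : 0 ≤ t)
    (hV : rG ystar - ε ≤ expReward φ rG (θt t)) :
    2 * Real.sqrt 2 * M ^ ((14:ℝ)/13) * Δ1 * rG ymed
        * (1 - Real.exp (-(Real.sqrt 2 * (Δ1 - ε))))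
        / ((Δ1 + Δ2) * (1 + 8 * Δ1))
        * policy φ (θt 0) ystar ^ (-(14:ℝ)/13) ≤ t := by
  have hne : Nonempty Y := ⟨ymed⟩
  have hD1 : 0 < Δ1 := by linarith
  have hrb := hr3 ybad hybad
  have hD2 : 0 < Δ2 := by linarith
  have hK2 : Δ1 + Δ2 ≤ 2 := by linarith [(hrG ystar).2, (hrG ybad).1]
  have hKpos : 0 < Δ1 + Δ2 := by linarith
  have hrm1 : rG ymed ≤ 1 := (hrG ymed).2
  set rm := rG ymed with hrm
  -- the ratios
  set w : ℝ → ℝ := fun s => Real.exp (⟪φ ystar, θt s⟫ - ⟪φ ymed, θt s⟫) with hw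
  set b : ℝ → ℝ := fun s => ∑ y ∈ Ybad, Real.exp (⟪φ y, θt s⟫ - ⟪φ ymed, θt s⟫) with hb
  set m : ℝ → ℝ := fun s => policy φ (θt s) ymed with hm
  have R := fun s => ratios φ rG ystar ymed ybad Ybad hsm hsb hmb hcover hr4 (θt s) (w s) (b s) (m s)
    rfl rfl rfl
  have hwp : ∀ s, 0 < w s := fun s => Real.exp_pos _
  have hbp : ∀ s, 0 < b s := fun s => Finset.sum_pos (fun y _ => Real.exp_pos _) ⟨ybad, hybad⟩
  have hmp : ∀ s, 0 < m s := fun s => (R s).1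
  have hm1 : ∀ s, m s * (1 + w s + b s) = 1 := fun s => (R s).2.1
  have hdx : ∀ s, 0 ≤ s → ∀ y, HasDerivAt (fun u => ⟪φ y, θt u⟫)
      (policy φ (θt s) y * (rG y - expReward φ rG (θt s))) s := by
    intro s hs y
    have h := (hasDerivAt_const s (φ y)).inner ℝ (hflow s hs)
    rw [inner_gradient φ horth] at h
    simpa using h
  -- rewards in terms of ratios
  have V1 : ∀ s, rG ystar - expReward φ rG (θt s) = m s * (Δ1 * (1 + b s) + Δ2 * b s) := by
    intro s
    rw [(R s).2.2.2.2.2, hΔ1, hΔ2]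
    linear_combination (-rG ystar) * hm1 s
  have V2 : ∀ s, rm - expReward φ rG (θt s) = m s * (Δ2 * b s - Δ1 * w s) := by
    intro s
    rw [(R s).2.2.2.2.2, hΔ1, hΔ2]
    linear_combination (-rm) * hm1 s
  have V3 : ∀ s, rG ybad - expReward φ rG (θt s) = - (m s * (Δ2 * (1 + w s) + Δ1 * w s)) := by
    intro s
    rw [(R s).2.2.2.2.2, hΔ1, hΔ2]
    linear_combination (-rG ybad) * hm1 s
  have dw : ∀ s, 0 ≤ s → HasDerivAt w
      (w s * m s ^ 2 * (Δ1 * w s * (2 + b s) - Δ2 * b s * (1 - w s))) s := by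
    intro s hs
    refine (((hdx s hs ystar).sub (hdx s hs ymed)).exp).congr_deriv ?_
    rw [V1, V2, (R s).2.2.1]
    change w s * (m s * w s * _ - m s * _) = _
    ring
  have db : ∀ s, 0 ≤ s → HasDerivAt b (- (m s ^ 2 * (Δ2 * (1 + w s) + Δ1 * w s)) *
      (∑ y ∈ Ybad, Real.exp (⟪φ y, θt s⟫ - ⟪φ ymed, θt s⟫) ^ 2)
      - b s * m s ^ 2 * (Δ2 * b s - Δ1 * w s)) s := by
    intro s hs
    refine (HasDerivAt.fun_sum (fun y _ =>
      ((hdx s hs y).sub (hdx s hs ymed)).exp)).congr_deriv ?_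
    have : b s * m s ^ 2 * (Δ2 * b s - Δ1 * w s) =
        (∑ y ∈ Ybad, Real.exp (⟪φ y, θt s⟫ - ⟪φ ymed, θt s⟫)) * (m s ^ 2 * (Δ2 * b s - Δ1 * w s)) := by
      rw [mul_assoc]
    rw [this, Finset.mul_sum, Finset.sum_mul, ← Finset.sum_sub_distrib]
    refine Finset.sum_congr rfl (fun y hy => ?_)
    rw [hr4 y hy, V2, V3, (R s).2.2.2.1 y]
    change Real.exp (⟪φ y, θt s⟫ - ⟪φ ymed, θt s⟫) * (_ - m s * _) = _
    ring
  have hsq0 : ∀ s, 0 ≤ ∑ y ∈ Ybad, Real.exp (⟪φ y, θt s⟫ - ⟪φ ymed, θt s⟫) ^ 2 :=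
    fun s => Finset.sum_nonneg (fun y _ => by positivity)
  have hsq1 : ∀ s, ∑ y ∈ Ybad, Real.exp (⟪φ y, θt s⟫ - ⟪φ ymed, θt s⟫) ^ 2 ≤ b s ^ 2 :=
    fun s => Finset.sum_sq_le_sq_sum_of_nonneg (fun y _ => (Real.exp_pos _).le)
  have hco : ∀ s, 0 ≤ m s ^ 2 * (Δ2 * (1 + w s) + Δ1 * w s) := by
    intro s
    have := hmp s
    have := hwp s
    positivity
  -- initial conditions
  set p0 := policy φ (θt 0) ystar with hp0
  have hp0w : p0 = m 0 * w 0 := (R 0).2.2.1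
  have hp0pos : 0 < p0 := by rw [hp0w]; exact mul_pos (hmp 0) (hwp 0)
  rw [(R 0).2.2.2.2.1] at hinit2 hinit3
  set μ := rm ^ ((2:ℝ)/7) with hμ
  have hμ7 : μ ^ 7 = rm ^ 2 := by
    rw [hμ, ← Real.rpow_natCast, ← Real.rpow_mul hr2.le, ← Real.rpow_natCast]
    norm_num
  have hμpos : 0 < μ := Real.rpow_pos_of_pos hr2 _
  have hμ1 : μ ≤ 1 := Real.rpow_le_one hr2.le hrm1 (by norm_num)
  have hMpos : 0 < M := by rw [hM]; positivity
  have hM1 : M ≤ 1 := by rw [hM]; exact min_le_left _ _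
  have hMK : M * (Δ1 + Δ2) ≤ 0.05 * μ := by
    rw [← le_div_iff₀ hKpos, hM]; exact min_le_right _ _
  set a := (p0 / M) ^ (((13:ℕ):ℝ)⁻¹) with ha
  have hapos : 0 < a := by positivity
  have ha13 : a ^ 13 = p0 / M := Real.rpow_inv_natCast_pow (by positivity) (by norm_num)
  have hpa : p0 = M * a ^ 13 := by rw [ha13]; field_simp
  have hpow : ∀ c : ℝ, p0 ^ c = M ^ c * a ^ (13 * c) := by
    intro c
    rw [hpa, Real.mul_rpow hMpos.le (by positivity), ← Real.rpow_natCast, ← Real.rpow_mul hapos.le]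
    norm_num
  set X := min 0.01 (min ((21 / (1100 * (Δ1 + Δ2))) ^ ((7:ℝ)/3)) (Δ2 ^ 2)) with hX
  have hX0 : 0 ≤ X := by positivity
  have haX : a ^ 14 < X := by
    rw [hpa] at hinit1
    have h1 := lt_of_mul_lt_mul_left hinit1 hMpos.le
    have h2 : a ^ 13 = (a ^ 14) ^ ((13:ℝ)/14) := by
      rw [← Real.rpow_natCast a 14, ← Real.rpow_mul hapos.le, ← Real.rpow_natCast]
      norm_num
    rw [h2] at h1
    exact (Real.rpow_lt_rpow_iff (by positivity) hX0 (by norm_num)).1 h1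
  have ha1 : a ^ 14 < 0.01 := haX.trans_le (min_le_left _ _)
  have ha2 : a ^ 14 < Δ2 ^ 2 := haX.trans_le ((min_le_right _ _).trans (min_le_right _ _))
  have hb02 := (le_max_right _ _).trans hinit2
  have hb03 : 2 * a ^ 7 ≤ Δ2 * (m 0 * b 0) := by
    have h := (le_max_left _ _).trans hinit2
    rw [hpow] at h
    have e : a ^ (13 * ((7:ℝ)/13)) = a ^ 7 := by
      rw [← Real.rpow_natCast]
      norm_num
    rw [e] at h
    have hMM : 0 < M ^ ((7:ℝ)/13) := by positivity
    have e2 : 2 * (M ^ ((7:ℝ)/13) * a ^ 7) / (Δ2 * M ^ ((7:ℝ)/13)) = 2 * a ^ 7 / Δ2 := by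
      field_simp
    rw [e2, div_le_iff₀ hD2] at h
    linarith
  have hfin := core w b _ m Δ1 Δ2 t a M μ rm p0 (Δ1 - ε) ht hD1 hD2 hK2 hwp hbp hmp hm1 dw db
    (fun s _ => by
      have := mul_le_mul_of_nonneg_left (hsq1 s) (hco s)
      nlinarith)
    (fun s _ => by
      have := mul_nonneg (hco s) (hsq0 s)
      linarith)
    hapos hMpos hM1 hμ1 hr2 hrm1 (by linarith) hμ7 hMK hpa ha1 ha2 hp0w hinit3 hb02 hb03
    (by linarith [hε.2]) (by linarith [hε.1]) (by linarith [hε.1, (hrG ystar).2]) (by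
      have := V2 t
      linarith)
  refine le_trans (le_of_eq ?_) hfin
  have e : a ^ (13 * (-(14:ℝ)/13)) = (a ^ 14)⁻¹ := by
    rw [← Real.rpow_natCast, ← Real.rpow_neg hapos.le]
    norm_num
  have e2 : M ^ ((14:ℝ)/13) * M ^ (-(14:ℝ)/13) = 1 := by
    rw [← Real.rpow_add hMpos]
    norm_num
  rw [hpow, e]
  linear_combination (2 * Real.sqrt 2 * Δ1 * rm * (1 - Real.exp (-(Real.sqrt 2 * (Δ1 - ε))))
    / ((Δ1 + Δ2) * (1 + 8 * Δ1)) * (a ^ 14)⁻¹) * e2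
end

section
/- Assume the ground truth reward r_G satisfies the reward structure assumption, the initial parameters θ_0 satisfy the initial policy assumption (general-features case), the feature vectors satisfy the positive-inner-product feature assumption, and ‖φ(y_med)‖² < s < ‖φ(y_⋆)‖² < 100‖φ(y_med)‖². Let ε ∈ (0, Δ1), and suppose θ_t is the gradient flow maximizing V_G. Then there exists a time t ≤ (r_G(y_⋆) + 1)² / (ε² Δ1 ‖φ(y_⋆) − φ(y_med)‖²) · π_{θ_0}(y_⋆)^{−1} at which V_G(θ_t) ≥ r_G(y_⋆) − ε. -/
open scoped BigOperators RealInnerProductSpace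

theorem policy_pos_aux {Y : Type*} [Fintype Y] {D : ℕ}
    (φ : Y → EuclideanSpace ℝ (Fin D)) (θ : EuclideanSpace ℝ (Fin D)) (y : Y) :
    0 < policy φ θ y := by
  unfold policy
  exact div_pos (Real.exp_pos _) (Finset.sum_pos (fun _ _ => Real.exp_pos _) ⟨y, Finset.mem_univ y⟩)

theorem policy_sum_aux {Y : Type*} [Fintype Y] {D : ℕ}
    (φ : Y → EuclideanSpace ℝ (Fin D)) (θ : EuclideanSpace ℝ (Fin D)) (y0 : Y) :
    ∑ y, policy φ θ y = 1 := by
  unfold policy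
  rw [← Finset.sum_div]
  exact div_self (Finset.sum_pos (fun _ _ => Real.exp_pos _) ⟨y0, Finset.mem_univ y0⟩).ne'

theorem policy_inv_aux {Y : Type*} [Fintype Y] {D : ℕ}
    (φ : Y → EuclideanSpace ℝ (Fin D)) (θ : EuclideanSpace ℝ (Fin D)) (y : Y) :
    ∑ z, Real.exp (⟪φ z, θ⟫ - ⟪φ y, θ⟫) = (policy φ θ y)⁻¹ := by
  unfold policy
  rw [inv_div, Finset.sum_div]
  simp_rw [Real.exp_sub]

theorem gradient_aux {Y : Type*} [Fintype Y] {D : ℕ}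
    (φ : Y → EuclideanSpace ℝ (Fin D)) (r : Y → ℝ) (θ : EuclideanSpace ℝ (Fin D)) (y0 : Y) :
    gradient (expReward φ r) θ
      = ∑ y, (policy φ θ y * (r y - expReward φ r θ)) • φ y := by
  apply HasGradientAt.gradient
  rw [hasGradientAt_iff_hasFDerivAt]
  have hZ : 0 < ∑ z, Real.exp ⟪φ z, θ⟫ :=
    Finset.sum_pos (fun _ _ => Real.exp_pos _) ⟨y0, Finset.mem_univ y0⟩
  have he : ∀ y, HasFDerivAt (fun x : EuclideanSpace ℝ (Fin D) => Real.exp ⟪φ y, x⟫)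
      (Real.exp ⟪φ y, θ⟫ • innerSL ℝ (φ y)) θ := fun y =>
    ((innerSL ℝ (φ y)).hasFDerivAt (x := θ)).exp
  have hZd : HasFDerivAt (fun x : EuclideanSpace ℝ (Fin D) => ∑ z, Real.exp ⟪φ z, x⟫)
      (∑ z, Real.exp ⟪φ z, θ⟫ • innerSL ℝ (φ z)) θ :=
    HasFDerivAt.fun_sum fun y _ => he y
  have hNd : HasFDerivAt (fun x : EuclideanSpace ℝ (Fin D) => ∑ z, Real.exp ⟪φ z, x⟫ * r z)
      (∑ z, r z • (Real.exp ⟪φ z, θ⟫ • innerSL ℝ (φ z))) θ :=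
    HasFDerivAt.fun_sum fun y _ => (he y).mul_const (r y)
  have hV : ∀ x, expReward φ r x
      = (∑ z, Real.exp ⟪φ z, x⟫ * r z) * (∑ z, Real.exp ⟪φ z, x⟫)⁻¹ := by
    intro x
    unfold expReward policy
    rw [Finset.sum_mul]
    refine Finset.sum_congr rfl fun y _ => ?_
    ring
  have hinv := (hasDerivAt_inv hZ.ne').comp_hasFDerivAt θ hZd
  have h := hNd.mul hinv
  have hfun : expReward φ r = ((fun x : EuclideanSpace ℝ (Fin D) => ∑ z, Real.exp ⟪φ z, x⟫ * r z)
      * ((fun y : ℝ => y⁻¹) ∘ fun x : EuclideanSpace ℝ (Fin D) => ∑ z, Real.exp ⟪φ z, x⟫)) := by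
    funext x; simp [hV x]
  rw [hfun]
  refine h.congr_fderiv ?_
  rw [← hfun, hV θ]
  ext v
  simp only [policy, map_sum, map_smul, InnerProductSpace.toDual_apply_apply,
    ContinuousLinearMap.add_apply, ContinuousLinearMap.sum_apply, ContinuousLinearMap.smul_apply,
    innerSL_apply_apply, smul_eq_mul, Function.comp]
  rw [Finset.mul_sum, Finset.mul_sum, Finset.mul_sum, ← Finset.sum_add_distrib]
  refine Finset.sum_congr rfl fun y _ => ?_
  field_simp
  ring

theorem key_ineq_aux {p q β A C S N s m W : ℝ} (hp : 0 < p) (hq : 0 < q) (hβ : 0 ≤ β)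
    (hsum : p + q + β = 1) (hA : 0 ≤ A) (hAC : 0 ≤ A + C) (h1 : m < s) (h2 : s < S)
    (hm : 0 ≤ m) (hN : N = S - 2 * s + m) (hW : W ≤ 0) :
    p * (A * S + C * s) + q * (A * s + C * m) + W - (A * S + C * s)
      ≤ - ((1 - p) * A * N) := by
  have e : p = 1 - q - β := by linarith
  subst e
  have i1 : 0 ≤ q * ((A + C) * (s - m)) :=
    mul_nonneg hq.le (mul_nonneg hAC (by linarith))
  have i2 : 0 ≤ β * ((A + C) * s) := mul_nonneg hβ (mul_nonneg hAC (by linarith))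
  have i3 : 0 ≤ β * (A * (s - m)) := mul_nonneg hβ (mul_nonneg hA (by linarith))
  subst hN
  nlinarith

theorem fast_opt_pos_inner {Y : Type*} [Fintype Y] {D : ℕ}
    (φ : Y → EuclideanSpace ℝ (Fin D)) (hφ : ∀ y, φ y ≠ 0)
    (rG : Y → ℝ) (hrG : ∀ y, rG y ∈ Set.Icc (-1 : ℝ) 1)
    (ystar ymed ybad : Y) (Ybad : Finset Y) (hybad : ybad ∈ Ybad)
    (hsm : ystar ≠ ymed) (hsb : ystar ∉ Ybad) (hmb : ymed ∉ Ybad)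
    (hcover : ∀ y : Y, y = ystar ∨ y = ymed ∨ y ∈ Ybad)
    (hr1 : rG ymed < rG ystar) (hr2 : 0 < rG ymed)
    (hr3 : ∀ y ∈ Ybad, rG y ≤ 0)
    (hr4 : ∀ y ∈ Ybad, rG y = rG ybad)
    (Δ1 Δ2 : ℝ) (hΔ1 : Δ1 = rG ystar - rG ymed) (hΔ2 : Δ2 = rG ymed - rG ybad)
    (s : ℝ) (hs : s = ⟪φ ystar, φ ymed⟫) (hspos : 0 < s)
    (horthbad : ∀ yb ∈ Ybad, ∀ y : Y, y ≠ yb → ⟪φ yb, φ y⟫ = 0)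
    (θt : ℝ → EuclideanSpace ℝ (Fin D))
    (hflow : ∀ t : ℝ, 0 ≤ t → HasDerivAt θt (gradient (expReward φ rG) (θt t)) t)
    (B M' : ℝ)
    (hB : B = Finset.univ.sup' ⟨ystar, Finset.mem_univ ystar⟩ fun y => ‖φ y‖)
    (hM' : M' = min 1 (‖φ ymed‖ ^ 2 * rG ymed ^ ((2:ℝ)/7) / (40 * B ^ 2 * (Δ1 + Δ2))))
    (hinit1 : policy φ (θt 0) ystar
        < min (M' * (min 0.01 ((21 * ‖φ ymed‖ ^ 2 / (1100 * B ^ 2 * (Δ1 + Δ2))) ^ ((7:ℝ)/3))) ^ ((13:ℝ)/14))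
            (‖φ ymed‖ / ‖φ ystar‖ * policy φ (θt 0) ymed))
    (hinit2 : max (2 * policy φ (θt 0) ystar ^ ((7:ℝ)/13) / (Δ2 * M' ^ ((7:ℝ)/13)))
        (0.05 * rG ymed) ≤ ∑ y ∈ Ybad, policy φ (θt 0) y)
    (hinit3 : ∑ y ∈ Ybad, policy φ (θt 0) y ≤ 0.1 * rG ymed)
    (hchain1 : ‖φ ymed‖ ^ 2 < s) (hchain2 : s < ‖φ ystar‖ ^ 2)
    (hchain3 : ‖φ ystar‖ ^ 2 < 100 * ‖φ ymed‖ ^ 2)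
    (ε : ℝ) (hε : ε ∈ Set.Ioo 0 Δ1) :
    ∃ t : ℝ, 0 ≤ t ∧
      t ≤ (rG ystar + 1) ^ 2 / (ε ^ 2 * Δ1 * ‖φ ystar - φ ymed‖ ^ 2)
          * (policy φ (θt 0) ystar)⁻¹ ∧
      rG ystar - ε ≤ expReward φ rG (θt t) := by
  classical
  obtain ⟨hε0, hε1⟩ := hε
  have hΔ1pos : 0 < Δ1 := by linarith
  have hsplit : ∀ F : Y → ℝ, ∑ y, F y = F ystar + F ymed + ∑ y ∈ Ybad, F y := by
    intro F
    have : (Finset.univ : Finset Y) = insert ystar (insert ymed Ybad) := by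
      ext y; simpa using hcover y
    rw [this, Finset.sum_insert (by simp [hsm, hsb]), Finset.sum_insert hmb]
    ring
  have hN : ‖φ ystar - φ ymed‖ ^ 2 = ‖φ ystar‖ ^ 2 - 2 * s + ‖φ ymed‖ ^ 2 := by
    rw [hs, norm_sub_sq_real]
  have hNpos : 0 < ‖φ ystar - φ ymed‖ ^ 2 := by
    have : φ ystar - φ ymed ≠ 0 := by
      intro h
      have h' : φ ystar = φ ymed := sub_eq_zero.mp h
      rw [h'] at hchain2
      linarith
    positivity
  set N := ‖φ ystar - φ ymed‖ ^ 2 with hNdef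
  have hr1' : rG ystar ≤ 1 := (hrG ystar).2
  have hrb : -1 ≤ rG ybad := (hrG ybad).1
  have hrb0 : rG ybad ≤ 0 := hr3 _ hybad
  set T := (rG ystar + 1) ^ 2 / (ε ^ 2 * Δ1 * N) * (policy φ (θt 0) ystar)⁻¹ with hT
  have hp0 := policy_pos_aux φ (θt 0) ystar
  have hR : 0 < rG ystar + 1 := by linarith
  have hTpos : 0 < T := by positivity
  by_contra hcon
  push Not at hcon
  -- reciprocal of the probability of the best output
  let g : ℝ → EuclideanSpace ℝ (Fin D) := fun t => gradient (expReward φ rG) (θt t)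
  let f : ℝ → ℝ := fun t => ∑ z, Real.exp (⟪φ z, θt t⟫ - ⟪φ ystar, θt t⟫)
  let f' : ℝ → ℝ := fun t => ∑ z, Real.exp (⟪φ z, θt t⟫ - ⟪φ ystar, θt t⟫)
    * (⟪φ z, g t⟫ - ⟪φ ystar, g t⟫)
  have hu : ∀ t, 0 ≤ t → ∀ z, HasDerivAt (fun t => ⟪φ z, θt t⟫) ⟪φ z, g t⟫ t := by
    intro t ht z
    have := (innerSL ℝ (φ z)).hasFDerivAt.comp_hasDerivAt t (hflow t ht)
    exact this
  have hf : ∀ t, 0 ≤ t → HasDerivAt f (f' t) t := by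
    intro t ht
    exact HasDerivAt.fun_sum fun z _ => ((hu t ht z).sub (hu t ht ystar)).exp
  obtain ⟨ξ, hξ, hslope⟩ := exists_hasDerivAt_eq_slope f f' hTpos
    (fun t ht => (hf t ht.1).continuousAt.continuousWithinAt)
    (fun t ht => hf t ht.1.le)
  have hVlt := hcon ξ hξ.1.le hξ.2.le
  -- bound on the derivative
  have hbound : f' ξ ≤ - (ε ^ 2 * Δ1 * N / (rG ystar + 1) ^ 2) := by
    set θ := θt ξ with hθ
    set V := expReward φ rG θ with hVdef
    set p := policy φ θ ystar with hpdef
    set q := policy φ θ ymed with hqdef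
    set β := ∑ y ∈ Ybad, policy φ θ y with hβdef
    have hp : 0 < p := policy_pos_aux φ θ ystar
    have hq : 0 < q := policy_pos_aux φ θ ymed
    have hβ : 0 ≤ β := Finset.sum_nonneg fun y _ => (policy_pos_aux φ θ y).le
    have hsum : p + q + β = 1 := by
      rw [← policy_sum_aux φ θ ystar, hsplit]
    have hV : V = p * rG ystar + q * rG ymed + β * rG ybad := by
      rw [hVdef, expReward, hsplit, hβdef, Finset.sum_mul]
      congr 1
      exact Finset.sum_congr rfl fun y hy => by rw [hr4 y hy]
    have hVb : rG ybad ≤ V := by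
      rw [hV]; nlinarith
    have hgξ : g ξ = ∑ y, (policy φ θ y * (rG y - V)) • φ y :=
      gradient_aux φ rG θ ystar
    have hin : ∀ z, ⟪φ z, g ξ⟫ = p * (rG ystar - V) * ⟪φ z, φ ystar⟫
        + q * (rG ymed - V) * ⟪φ z, φ ymed⟫
        + ∑ y ∈ Ybad, policy φ θ y * (rG y - V) * ⟪φ z, φ y⟫ := by
      intro z
      rw [hgξ, inner_sum]
      simp_rw [inner_smul_right]
      rw [hsplit]
    have hgood : ∀ z, z ∉ Ybad →
        ∑ y ∈ Ybad, policy φ θ y * (rG y - V) * ⟪φ z, φ y⟫ = 0 := by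
      intro z hz
      refine Finset.sum_eq_zero fun y hy => ?_
      rw [real_inner_comm, horthbad y hy z (fun h => hz (h ▸ hy)), mul_zero]
    have hus : ⟪φ ystar, g ξ⟫ = p * (rG ystar - V) * ‖φ ystar‖ ^ 2 + q * (rG ymed - V) * s := by
      rw [hin, hgood _ hsb, real_inner_self_eq_norm_sq, hs, add_zero]
    have hum : ⟪φ ymed, g ξ⟫ = p * (rG ystar - V) * s + q * (rG ymed - V) * ‖φ ymed‖ ^ 2 := by
      rw [hin, hgood _ hmb, real_inner_self_eq_norm_sq, hs, add_zero, real_inner_comm]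
    have hub : ∀ y ∈ Ybad, ⟪φ y, g ξ⟫ = policy φ θ y * (rG y - V) * ‖φ y‖ ^ 2 := by
      intro y hy
      rw [hin, horthbad y hy ystar (fun h => hsb (h ▸ hy)),
        horthbad y hy ymed (fun h => hmb (h ▸ hy)), Finset.sum_eq_single_of_mem y hy,
        real_inner_self_eq_norm_sq]
      · ring
      · intro z _ hz
        rw [horthbad y hy z hz, mul_zero]
    have hW : ∑ y ∈ Ybad, policy φ θ y * ⟪φ y, g ξ⟫ ≤ 0 := by
      refine Finset.sum_nonpos fun y hy => ?_
      rw [hub y hy]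
      have h1 := (policy_pos_aux φ θ y).le
      have h2 : rG y - V ≤ 0 := by rw [hr4 y hy]; linarith
      exact mul_nonpos_of_nonneg_of_nonpos h1
        (mul_nonpos_of_nonpos_of_nonneg (mul_nonpos_of_nonneg_of_nonpos h1 h2) (sq_nonneg _))
    have hA : p * ε ≤ p * (rG ystar - V) := mul_le_mul_of_nonneg_left (by linarith) hp.le
    have hAC : 0 ≤ p * (rG ystar - V) + q * (rG ymed - V) := by
      have e : p * (rG ystar - V) + q * (rG ymed - V) = β * (V - rG ybad) := by
        have : V * (p + q + β) = V := by rw [hsum, mul_one]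
        linarith [hV, this]
      rw [e]; exact mul_nonneg hβ (by linarith)
    have hkey := key_ineq_aux hp hq hβ hsum (by have := mul_pos hp hε0; linarith) hAC hchain1
      hchain2 (sq_nonneg _) hN hW
    have h1p : ε ≤ (1 - p) * (rG ystar + 1) := by
      have e : p = 1 - q - β := by linarith
      have b1 : 0 ≤ q * (rG ymed + 1) := mul_nonneg hq.le (by linarith)
      have b2 : 0 ≤ β * (rG ybad + 1) := mul_nonneg hβ (by linarith)
      have b3 : V = (1 - q - β) * rG ystar + q * rG ymed + β * rG ybad := by rw [hV, e]
      have b4 : (1 - p) * (rG ystar + 1) = (q + β) * (rG ystar + 1) := by rw [e]; ring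
      rw [b4]
      linarith
    have hf'ξ : p * f' ξ = p * ⟪φ ystar, g ξ⟫ + q * ⟪φ ymed, g ξ⟫
        + ∑ y ∈ Ybad, policy φ θ y * ⟪φ y, g ξ⟫ - ⟪φ ystar, g ξ⟫ := by
      have e : ∀ z, p * (Real.exp (⟪φ z, θ⟫ - ⟪φ ystar, θ⟫)
          * (⟪φ z, g ξ⟫ - ⟪φ ystar, g ξ⟫)) = policy φ θ z * ⟪φ z, g ξ⟫
            - policy φ θ z * ⟪φ ystar, g ξ⟫ := by
        intro z
        have : p * Real.exp (⟪φ z, θ⟫ - ⟪φ ystar, θ⟫) = policy φ θ z := by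
          rw [hpdef, policy, policy, Real.exp_sub]
          field_simp
        rw [← mul_assoc, this]; ring
      change p * ∑ z, _ = _
      rw [Finset.mul_sum, Finset.sum_congr rfl fun z _ => e z, Finset.sum_sub_distrib,
        ← Finset.sum_mul, policy_sum_aux φ θ ystar, hsplit, one_mul]
    have h3 : p * f' ξ ≤ -((1 - p) * (p * (rG ystar - V)) * N) := by
      rw [hf'ξ, hus, hum]; exact hkey
    have h1p0 : 0 ≤ 1 - p := by linarith
    have h4 : (1 - p) * (p * ε) * N ≤ (1 - p) * (p * (rG ystar - V)) * N :=
      mul_le_mul_of_nonneg_right (mul_le_mul_of_nonneg_left hA h1p0) hNpos.le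
    have h5 : f' ξ ≤ -((1 - p) * ε * N) := by
      refine le_of_mul_le_mul_left ?_ hp
      linarith
    have h6 : ε ^ 2 * Δ1 * N / (rG ystar + 1) ^ 2 ≤ (1 - p) * ε * N := by
      rw [div_le_iff₀ (by positivity)]
      have a1 : Δ1 ≤ rG ystar + 1 := by linarith
      have a2 : ε * Δ1 ≤ (1 - p) * (rG ystar + 1) * (rG ystar + 1) :=
        mul_le_mul h1p a1 hΔ1pos.le (by positivity)
      have a3 := mul_le_mul_of_nonneg_left a2 (mul_pos hε0 hNpos).le
      linarith
    linarith
  have hf0 : f 0 = (policy φ (θt 0) ystar)⁻¹ := policy_inv_aux φ (θt 0) ystar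
  have hfT : 0 < f T := by
    have : f T = (policy φ (θt T) ystar)⁻¹ := policy_inv_aux φ (θt T) ystar
    rw [this]
    exact inv_pos.mpr (policy_pos_aux φ (θt T) ystar)
  rw [hslope, sub_zero, div_le_iff₀ hTpos, hf0] at hbound
  have hprod : ε ^ 2 * Δ1 * N / (rG ystar + 1) ^ 2 * T = (policy φ (θt 0) ystar)⁻¹ := by
    rw [hT]; field_simp
  linarith
end
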